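/- For all named GS4 derivations P with conclusion ⊢Γ,A∨B, the branch-labeled axiom graph is invariant under inversion of the disjunction: ⟨⟨inv(P, A∨B)⟩⟩ = ⟨⟨P⟩⟩. -/

import Mathlib

open scoped Classical

noncomputable section

namespace GS4

/-- Named classical propositional formulas over atoms `α`, with names in `ℕ`. -/
inductive NForm (α : Type) : Type
  | atom : ℕ → α → NForm α
  | or   : NForm α → NForm α → NForm α
  | and  : NForm α → NForm α → NForm α

variable {α : Type}

/-- Name-preserving De Morgan negation, w.r.t. an involution `bar` on atoms. -/
def negF (bar : α → α) : NForm α → NForm α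
  | .atom x a => .atom x (bar a)
  | .or A B => .and (negF bar A) (negF bar B)
  | .and A B => .or (negF bar A) (negF bar B)

/-- The set of names occurring in a named formula. -/
def NForm.names : NForm α → Set ℕ
  | .atom x _ => {x}
  | .or A B => A.names ∪ B.names
  | .and A B => A.names ∪ B.names

/-- A named formula is sharing-free if every name occurs at most once in it. -/
def NForm.sharingFree : NForm α → Prop
  | .atom _ _ => True
  | .or A B => A.sharingFree ∧ B.sharingFree ∧ Disjoint A.names B.names
  | .and A B => A.sharingFree ∧ B.sharingFree ∧ Disjoint A.names B.names

def NForm.isAtom : NForm α → Prop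
  | .atom _ _ => True
  | _ => False

/-- Anonymous formulas (shapes): `A ≡ B` iff their shapes coincide. -/
inductive Shape (α : Type) : Type
  | atom : α → Shape α
  | or   : Shape α → Shape α → Shape α
  | and  : Shape α → Shape α → Shape α

def NForm.shape : NForm α → Shape α
  | .atom _ a => .atom a
  | .or A B => .or A.shape B.shape
  | .and A B => .and A.shape B.shape

/-- `HasAtom A x a`: the atomic formula `x:a` occurs in `A`. -/
def HasAtom : NForm α → ℕ → α → Prop
  | .atom y b, x, a => y = x ∧ b = a
  | .or A B, x, a => HasAtom A x a ∨ HasAtom B x a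
  | .and A B, x, a => HasAtom A x a ∨ HasAtom B x a

/-- Names of a finite set of named formulas. -/
def snames (Γ : Finset (NForm α)) : Set ℕ := ⋃ A ∈ Γ, A.names

/-- A finite set of named formulas is sharing-free if all its elements are
sharing-free with pairwise disjoint name sets. -/
def SFSet (Γ : Finset (NForm α)) : Prop :=
  (∀ A ∈ Γ, A.sharingFree) ∧
  ∀ A ∈ Γ, ∀ B ∈ Γ, A ≠ B → Disjoint A.names B.names

/-- `x:a` occurs in some formula of `Γ` (i.e. `Γ[x] = a` for sharing-free `Γ`). -/
def HasAtomS (Γ : Finset (NForm α)) (x : ℕ) (a : α) : Prop :=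
  ∃ A ∈ Γ, HasAtom A x a

/-- Branch sets of named formulas. -/
def BrF : NForm α → Set (Set ℕ)
  | .atom x _ => {{x}}
  | .or A B => {X | ∃ Y ∈ BrF A, ∃ Z ∈ BrF B, X = Y ∪ Z}
  | .and A B => BrF A ∪ BrF B

/-- Branch sets of sequents (finite sharing-free sets of named formulas). -/
def BrS (Γ : Finset (NForm α)) : Set (Set ℕ) :=
  {X | X ⊆ snames Γ ∧ ∀ A ∈ Γ, X ∩ A.names ∈ BrF A}

/-! ## Branch-labeled name graphs -/

/-- A branch-labeled name graph: vertices and a relation between unordered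
pairs of vertices and branch labels. -/
structure BLGraph : Type where
  verts : Set ℕ
  rel : Sym2 ℕ → Set ℕ → Prop

/-- Well-formedness of a bl-graph: related pairs consist of distinct vertices,
labels are sets of vertices, and each edge is included in its labels. -/
def BLGraph.IsBL (G : BLGraph) : Prop :=
  ∀ e X, G.rel e X → ¬ e.IsDiag ∧ X ⊆ G.verts ∧ ∀ v ∈ e, v ∈ X

def BLGraph.Edges (G : BLGraph) : Set (Sym2 ℕ) := {e | ∃ X, G.rel e X}

def BLGraph.Br (G : BLGraph) : Set (Set ℕ) := {X | ∃ e, G.rel e X}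

def BLGraph.union (G H : BLGraph) : BLGraph :=
  ⟨G.verts ∪ H.verts, fun e X => G.rel e X ∨ H.rel e X⟩

/-- Restriction `G↾_S` of a bl-graph. -/
def BLGraph.restrict (G : BLGraph) (S : Set ℕ) : BLGraph :=
  ⟨G.verts ∩ S, fun e X => G.rel e X ∧ X ⊆ S⟩

/-- The interface-relativized edge-branch relation `e ⊰^I_G X`. -/
def BLGraph.relI (G : BLGraph) (I : Set ℕ) (e : Sym2 ℕ) (X : Set ℕ) : Prop :=
  ∃ Y, G.rel e Y ∧ X = Y \ I

/-- `z 0, …, z (n-1)` is an `X`-labeled alternating path between `G` and `H`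
through the interface `I`. -/
def AltPath (G H : BLGraph) (I X : Set ℕ) (n : ℕ) (z : ℕ → ℕ) : Prop :=
  1 < n ∧
  (∀ i < n, ∀ j < n, z i = z j → i = j) ∧
  (∀ i, 0 < i → i + 1 < n → z i ∈ I) ∧
  ((∀ i, i + 1 < n →
      (Even i → G.relI I s(z i, z (i + 1)) X) ∧ (¬ Even i → H.relI I s(z i, z (i + 1)) X)) ∨
   (∀ i, i + 1 < n →
      (Even i → H.relI I s(z i, z (i + 1)) X) ∧ (¬ Even i → G.relI I s(z i, z (i + 1)) X)))

/-- Composition of bl-graphs over an interface `I`. -/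
def BLGraph.comp (G H : BLGraph) (I : Set ℕ) : BLGraph :=
  ⟨(G.verts ∪ H.verts) \ I,
   fun e X => ∃ n z, AltPath G H I X n z ∧ z 0 ∉ I ∧ z (n - 1) ∉ I ∧
     e = s(z 0, z (n - 1))⟩

/-- The weakening operator on bl-graphs: add vertices `V` and extend every
branch label by a member of `Brs`. -/
def blwk (V : Set ℕ) (Brs : Set (Set ℕ)) (G : BLGraph) : BLGraph :=
  ⟨G.verts ∪ V, fun e X => ∃ Y Z, G.rel e Y ∧ Z ∈ Brs ∧ X = Y ∪ Z⟩

/-- The bl-identity graph `id_{A,C}` on a pair of dual formulas. -/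
def blid : NForm α → NForm α → BLGraph
  | .atom x _, .atom y _ => ⟨{x, y}, fun e X => e = s(x, y) ∧ X = {x, y}⟩
  | .or A1 A2, .and C1 C2 =>
      (blwk A2.names (BrF A2) (blid A1 C1)).union (blwk A1.names (BrF A1) (blid A2 C2))
  | .and A1 A2, .or C1 C2 =>
      (blwk C2.names (BrF C2) (blid A1 C1)).union (blwk C1.names (BrF C1) (blid A2 C2))
  | _, _ => ⟨∅, fun _ _ => False⟩

/-! ## Simple name graphs -/

/-- A simple name graph. -/
structure NGraph : Type where
  verts : Set ℕ
  edges : Set (Sym2 ℕ)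

/-- Subgraph relation `H ⊑ G`. -/
def NGraph.Sub (H G : NGraph) : Prop := H.verts ⊆ G.verts ∧ H.edges ⊆ G.edges

def NGraph.union (G H : NGraph) : NGraph := ⟨G.verts ∪ H.verts, G.edges ∪ H.edges⟩

/-- Induced subgraph `G↾_S`. -/
def NGraph.restrict (G : NGraph) (S : Set ℕ) : NGraph :=
  ⟨G.verts ∩ S, {e ∈ G.edges | ∀ v ∈ e, v ∈ S}⟩

/-- Alternating paths between simple name graphs through an interface. -/
def NAltPath (G H : NGraph) (I : Set ℕ) (n : ℕ) (z : ℕ → ℕ) : Prop :=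
  0 < n ∧
  (∀ i < n, ∀ j < n, z i = z j → i = j) ∧
  (∀ i, 0 < i → i + 1 < n → z i ∈ I) ∧
  ((∀ i, i + 1 < n →
      (Even i → s(z i, z (i + 1)) ∈ G.edges) ∧ (¬ Even i → s(z i, z (i + 1)) ∈ H.edges)) ∨
   (∀ i, i + 1 < n →
      (Even i → s(z i, z (i + 1)) ∈ H.edges) ∧ (¬ Even i → s(z i, z (i + 1)) ∈ G.edges)))

/-- Composition of simple name graphs over an interface. -/
def NGraph.comp (G H : NGraph) (I : Set ℕ) : NGraph :=
  ⟨(G.verts ∪ H.verts) \ I,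
   {e | ∃ x y, x ≠ y ∧ x ∈ (G.verts ∪ H.verts) \ I ∧ y ∈ (G.verts ∪ H.verts) \ I ∧
        e = s(x, y) ∧ ∃ n z, NAltPath G H I n z ∧ z 0 = x ∧ z (n - 1) = y}⟩

/-- The identity graph `Id_{A,C}` on a pair of dual formulas. -/
def idg : NForm α → NForm α → NGraph
  | .atom x _, .atom y _ => ⟨{x, y}, {s(x, y)}⟩
  | .or A1 A2, .and C1 C2 => (idg A1 C1).union (idg A2 C2)
  | .and A1 A2, .or C1 C2 => (idg A1 C1).union (idg A2 C2)
  | _, _ => ⟨∅, ∅⟩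

/-- The edgeless (weakening) graph on the names of `Γ`. -/
def wkg (Γ : Finset (NForm α)) : NGraph := ⟨snames Γ, ∅⟩

/-! ## Named GS4 derivations -/

/-- Named GS4 derivation trees. -/
inductive Deriv (α : Type) : Type
  | ax (Γ : Finset (NForm α)) (A C : NForm α)
  | cut (A : NForm α) (P Q : Deriv α)
  | sup (P Q : Deriv α)
  | orI (A B : NForm α) (P : Deriv α)
  | andI (A B : NForm α) (P Q : Deriv α)

/-- Conclusion of a derivation tree. -/
def concl : Deriv α → Finset (NForm α)
  | .ax Γ A C => insert A (insert C Γ)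
  | .cut A P _ => (concl P).erase A
  | .sup P _ => concl P
  | .orI A B P => insert (NForm.or A B) (((concl P).erase A).erase B)
  | .andI A B P _ => insert (NForm.and A B) ((concl P).erase A)

/-- Well-formedness of derivation trees w.r.t. the atom involution `bar`:
each rule is applied correctly to sharing-free named sequents. -/
def WF (bar : α → α) : Deriv α → Prop
  | .ax Γ A C =>
      A.shape = (negF bar C).shape ∧
      A.sharingFree ∧ C.sharingFree ∧ SFSet Γ ∧
      Disjoint A.names C.names ∧
      Disjoint A.names (snames Γ) ∧ Disjoint C.names (snames Γ)
  | .cut A P Q =>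
      WF bar P ∧ WF bar Q ∧
      ∃ Γ : Finset (NForm α), A ∉ Γ ∧ negF bar A ∉ Γ ∧
        concl P = insert A Γ ∧ concl Q = insert (negF bar A) Γ ∧
        A.sharingFree ∧ SFSet Γ ∧ Disjoint A.names (snames Γ)
  | .sup P Q => WF bar P ∧ WF bar Q ∧ concl P = concl Q
  | .orI A B P =>
      WF bar P ∧
      ∃ Γ : Finset (NForm α), A ∉ Γ ∧ B ∉ Γ ∧ A ≠ B ∧
        concl P = insert A (insert B Γ) ∧
        A.sharingFree ∧ B.sharingFree ∧ SFSet Γ ∧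
        Disjoint A.names B.names ∧
        Disjoint A.names (snames Γ) ∧ Disjoint B.names (snames Γ)
  | .andI A B P Q =>
      WF bar P ∧ WF bar Q ∧
      ∃ Γ : Finset (NForm α), A ∉ Γ ∧ B ∉ Γ ∧
        concl P = insert A Γ ∧ concl Q = insert B Γ ∧
        A.sharingFree ∧ B.sharingFree ∧ SFSet Γ ∧
        Disjoint A.names B.names ∧
        Disjoint A.names (snames Γ) ∧ Disjoint B.names (snames Γ)

/-- A derivation is cut-free if it contains no cut rule. -/
def CutFree : Deriv α → Prop
  | .ax _ _ _ => True
  | .cut _ _ _ => False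
  | .sup P Q => CutFree P ∧ CutFree Q
  | .orI _ _ P => CutFree P
  | .andI _ _ P Q => CutFree P ∧ CutFree Q

/-- The branch-labeled axiom graph `⟨⟨P⟩⟩` of a derivation. -/
def blaxg : Deriv α → BLGraph
  | .ax Γ A C => blwk (snames Γ) (BrS Γ) (blid A C)
  | .cut A P Q => BLGraph.comp (blaxg P) (blaxg Q) A.names
  | .sup P Q => (blaxg P).union (blaxg Q)
  | .orI _ _ P => blaxg P
  | .andI _ _ P Q => (blaxg P).union (blaxg Q)

/-- The (simple) axiom graph `⟦P⟧` of a derivation. -/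
def axg : Deriv α → NGraph
  | .ax Γ A C => (wkg Γ).union (idg A C)
  | .cut A P Q => NGraph.comp (axg P) (axg Q) A.names
  | .sup P Q => (axg P).union (axg Q)
  | .orI _ _ P => axg P
  | .andI _ _ P Q => (axg P).union (axg Q)

/-! ## Inversion and isolation -/

/-- Inversion of a disjunction `D ∨ E` in the conclusion. -/
def inv (D E : NForm α) : Deriv α → Deriv α
  | .ax Γ A C =>
      if A = NForm.or D E then
        match C with
        | .and C1 C2 =>
            .andI C1 C2 (.ax (insert E Γ) D C1) (.ax (insert D Γ) E C2)
        | _ => .ax Γ A C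
      else if C = NForm.or D E then
        match A with
        | .and A1 A2 =>
            .andI A1 A2 (.ax (insert E Γ) A1 D) (.ax (insert D Γ) A2 E)
        | _ => .ax Γ A C
      else
        .ax (insert D (insert E (Γ.erase (NForm.or D E)))) A C
  | .cut A P Q => .cut A (inv D E P) (inv D E Q)
  | .sup P Q => .sup (inv D E P) (inv D E Q)
  | .orI A B P => if A = D ∧ B = E then P else .orI A B (inv D E P)
  | .andI A B P Q => .andI A B (inv D E P) (inv D E Q)

/-- Left inversion of a conjunction `D ∧ E` in the conclusion. -/
def invl (D E : NForm α) : Deriv α → Deriv α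
  | .ax Γ A C =>
      if A = NForm.and D E then
        match C with
        | .or C1 C2 => .orI C1 C2 (.ax (insert C2 Γ) D C1)
        | _ => .ax Γ A C
      else if C = NForm.and D E then
        match A with
        | .or A1 A2 => .orI A1 A2 (.ax (insert A2 Γ) A1 D)
        | _ => .ax Γ A C
      else
        .ax (insert D (Γ.erase (NForm.and D E))) A C
  | .cut A P Q => .cut A (invl D E P) (invl D E Q)
  | .sup P Q => .sup (invl D E P) (invl D E Q)
  | .orI A B P => .orI A B (invl D E P)
  | .andI A B P Q => if A = D ∧ B = E then P else .andI A B (invl D E P) (invl D E Q)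

/-- Right inversion of a conjunction `D ∧ E` in the conclusion. -/
def invr (D E : NForm α) : Deriv α → Deriv α
  | .ax Γ A C =>
      if A = NForm.and D E then
        match C with
        | .or C1 C2 => .orI C1 C2 (.ax (insert C1 Γ) E C2)
        | _ => .ax Γ A C
      else if C = NForm.and D E then
        match A with
        | .or A1 A2 => .orI A1 A2 (.ax (insert A1 Γ) A2 E)
        | _ => .ax Γ A C
      else
        .ax (insert E (Γ.erase (NForm.and D E))) A C
  | .cut A P Q => .cut A (invr D E P) (invr D E Q)
  | .sup P Q => .sup (invr D E P) (invr D E Q)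
  | .orI A B P => .orI A B (invr D E P)
  | .andI A B P Q => if A = D ∧ B = E then Q else .andI A B (invr D E P) (invr D E Q)

/-- Isolation of a non-atomic formula in the conclusion. -/
def isl : NForm α → Deriv α → Deriv α
  | .or A B, P => .orI A B (inv A B P)
  | .and A B, P => .andI A B (invl A B P) (invr A B P)
  | .atom _ _, P => P

/-- Totality of a bl-graph w.r.t. a sharing-free named sequent. -/
def Total (bar : α → α) (G : BLGraph) (Γ : Finset (NForm α)) : Prop :=
  G.verts = snames Γ ∧
  G.Br = BrS Γ ∧
  ∀ x y : ℕ, s(x, y) ∈ G.Edges →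
    ∀ a b : α, HasAtomS Γ x a → HasAtomS Γ y b → a = bar b

end GS4

namespace GS4

variable {α : Type}

theorem subset_names_of_mem_BrF {A : NForm α} {X : Set ℕ} (hX : X ∈ BrF A) : X ⊆ A.names := by
  induction A generalizing X with
  | atom x a => exact (Set.mem_singleton_iff.1 hX).subset
  | or A B ihA ihB =>
    obtain ⟨Y, hY, Z, hZ, rfl⟩ := hX
    exact Set.union_subset_union (ihA hY) (ihB hZ)
  | and A B ihA ihB =>
    rcases hX with hX | hX
    · exact (ihA hX).trans Set.subset_union_left
    · exact (ihB hX).trans Set.subset_union_right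

theorem names_subset_snames {A : NForm α} {Γ : Finset (NForm α)} (hA : A ∈ Γ) :
    A.names ⊆ snames Γ :=
  Set.subset_biUnion_of_mem (u := fun A : NForm α => A.names) hA

theorem snames_insert (A : NForm α) (Γ : Finset (NForm α)) :
    snames (insert A Γ) = A.names ∪ snames Γ := by
  simp [snames]

/-- A branch of a sequent extended by a formula with fresh names splits into a branch of the
formula and a branch of the sequent. -/
theorem mem_BrS_insert {A : NForm α} {Γ : Finset (NForm α)} (hA : Disjoint A.names (snames Γ))
    {X : Set ℕ} :
    X ∈ BrS (insert A Γ) ↔ ∃ Y ∈ BrF A, ∃ Z ∈ BrS Γ, X = Y ∪ Z := by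
  constructor
  · rintro ⟨hsub, hbr⟩
    rw [snames_insert] at hsub
    refine ⟨X ∩ A.names, hbr A (Finset.mem_insert_self _ _), X ∩ snames Γ,
      ⟨Set.inter_subset_right, fun C hC => ?_⟩, ?_⟩
    · rw [Set.inter_assoc, Set.inter_eq_self_of_subset_right (names_subset_snames hC)]
      exact hbr C (Finset.mem_insert_of_mem hC)
    · rw [← Set.inter_union_distrib_left, Set.inter_eq_self_of_subset_left hsub]
  · rintro ⟨Y, hY, Z, ⟨hZ, hbr⟩, rfl⟩
    have hYA := subset_names_of_mem_BrF hY
    refine ⟨?_, fun C hC => ?_⟩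
    · rw [snames_insert]
      exact Set.union_subset_union hYA hZ
    · rcases Finset.mem_insert.1 hC with rfl | hC
      · rw [Set.union_inter_distrib_right, Set.inter_eq_self_of_subset_left hYA,
          (hA.symm.mono_left hZ).inter_eq, Set.union_empty]
        exact hY
      · rw [Set.union_inter_distrib_right,
          (hA.mono hYA (names_subset_snames hC)).inter_eq, Set.empty_union]
        exact hbr C hC

theorem union_blwk_insert {D E : NForm α} {Γ : Finset (NForm α)}
    (hD : Disjoint D.names (snames Γ)) (hE : Disjoint E.names (snames Γ)) (G H : BLGraph) :
    (blwk (snames (insert E Γ)) (BrS (insert E Γ)) G).union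
        (blwk (snames (insert D Γ)) (BrS (insert D Γ)) H) =
      blwk (snames Γ) (BrS Γ)
        ((blwk E.names (BrF E) G).union (blwk D.names (BrF D) H)) := by
  simp only [BLGraph.union, blwk, snames_insert, mem_BrS_insert hD, mem_BrS_insert hE,
    BLGraph.mk.injEq]
  refine ⟨by ext; simp only [Set.mem_union]; tauto, ?_⟩
  funext e X
  refine propext ⟨?_, ?_⟩
  · rintro (⟨Y, _, hY, ⟨Z, hZ, W, hW, rfl⟩, rfl⟩ | ⟨Y, _, hY, ⟨Z, hZ, W, hW, rfl⟩, rfl⟩)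
    · exact ⟨Y ∪ Z, W, .inl ⟨Y, Z, hY, hZ, rfl⟩, hW, (Set.union_assoc ..).symm⟩
    · exact ⟨Y ∪ Z, W, .inr ⟨Y, Z, hY, hZ, rfl⟩, hW, (Set.union_assoc ..).symm⟩
  · rintro ⟨_, W, ⟨Y, Z, hY, hZ, rfl⟩ | ⟨Y, Z, hY, hZ, rfl⟩, hW, rfl⟩
    · exact .inl ⟨Y, Z ∪ W, hY, ⟨Z, hZ, W, hW, rfl⟩, Set.union_assoc ..⟩
    · exact .inr ⟨Y, Z ∪ W, hY, ⟨Z, hZ, W, hW, rfl⟩, Set.union_assoc ..⟩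

theorem snames_insert_or (D E : NForm α) (Γ : Finset (NForm α)) :
    snames (insert D (insert E Γ)) = snames (insert (NForm.or D E) Γ) := by
  simp only [snames_insert, NForm.names, Set.union_assoc]

theorem BrS_insert_or {D E : NForm α} {Γ : Finset (NForm α)}
    (hDE : Disjoint D.names E.names) (hΓ : Disjoint (NForm.or D E).names (snames Γ)) :
    BrS (insert D (insert E Γ)) = BrS (insert (NForm.or D E) Γ) := by
  have hD : Disjoint D.names (snames Γ) := hΓ.mono_left Set.subset_union_left
  have hE : Disjoint E.names (snames Γ) := hΓ.mono_left Set.subset_union_right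
  have hD' : Disjoint D.names (snames (insert E Γ)) := by
    rw [snames_insert]
    exact hDE.sup_right hD
  ext X
  rw [mem_BrS_insert hD', mem_BrS_insert hΓ]
  constructor
  · rintro ⟨Y, hY, _, hEΓ, rfl⟩
    obtain ⟨Z, hZ, W, hW, rfl⟩ := (mem_BrS_insert hE).1 hEΓ
    exact ⟨Y ∪ Z, ⟨Y, hY, Z, hZ, rfl⟩, W, hW, (Set.union_assoc ..).symm⟩
  · rintro ⟨_, ⟨Y, hY, Z, hZ, rfl⟩, W, hW, rfl⟩
    exact ⟨Y, hY, Z ∪ W, (mem_BrS_insert hE).2 ⟨Z, hZ, W, hW, rfl⟩, Set.union_assoc ..⟩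

theorem SFSet.disjoint_snames_erase {Γ : Finset (NForm α)} (hΓ : SFSet Γ) {A : NForm α}
    (hA : A ∈ Γ) : Disjoint A.names (snames (Γ.erase A)) := by
  simp only [snames, Set.disjoint_iUnion_right]
  intro C hC
  obtain ⟨hne, hC⟩ := Finset.mem_erase.1 hC
  exact hΓ.2 A hA C hC hne.symm

theorem blaxg_inv_ax (bar : α → α) {Γ : Finset (NForm α)} {A C D E : NForm α}
    (hP : WF bar (.ax Γ A C)) (h : NForm.or D E ∈ concl (.ax Γ A C)) :
    blaxg (inv D E (.ax Γ A C)) = blaxg (.ax Γ A C) := by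
  obtain ⟨hshape, -, -, hΓ, -, hAΓ, hCΓ⟩ := hP
  by_cases hA : A = NForm.or D E
  · subst hA
    cases C with
    | and C₁ C₂ =>
      simp only [inv, if_true, blaxg, blid]
      exact union_blwk_insert (hAΓ.mono_left Set.subset_union_left)
        (hAΓ.mono_left Set.subset_union_right) _ _
    | atom | or => simp [NForm.shape, negF] at hshape
  · by_cases hC : C = NForm.or D E
    · subst hC
      cases A with
      | and A₁ A₂ =>
        simp only [inv, if_neg hA, if_true, blaxg, blid]
        exact union_blwk_insert (hCΓ.mono_left Set.subset_union_left)
          (hCΓ.mono_left Set.subset_union_right) _ _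
      | atom | or => simp [NForm.shape, negF] at hshape
    · have hmem : NForm.or D E ∈ Γ := by
        simpa [concl, Ne.symm hA, Ne.symm hC] using h
      have hDE : Disjoint D.names E.names := (hΓ.1 _ hmem).2.2
      simp only [inv, if_neg hA, if_neg hC, blaxg, snames_insert_or,
        BrS_insert_or hDE (hΓ.disjoint_snames_erase hmem), Finset.insert_erase hmem]

end GS4

/-- the branch-labeled axiom graph is invariant under inversion
of a disjunction in the conclusion. -/
theorem GS4.blaxg_inv_or {α : Type} (bar : α → α)
    (hbar : Function.Involutive bar) (hfix : ∀ a, bar a ≠ a)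
    (P : GS4.Deriv α) (hP : GS4.WF bar P)
    (A B : GS4.NForm α) (h : GS4.NForm.or A B ∈ GS4.concl P) :
    GS4.blaxg (GS4.inv A B P) = GS4.blaxg P := by
  induction P with
  | ax Γ F C => exact blaxg_inv_ax bar hP h
  | cut F P Q ihP ihQ =>
    obtain ⟨hWP, hWQ, Γ, hF, -, hcP, hcQ, -⟩ := hP
    have hmem : NForm.or A B ∈ Γ := by simpa [concl, hcP, hF] using h
    simp only [inv, blaxg, ihP hWP (by simp [hcP, hmem]), ihQ hWQ (by simp [hcQ, hmem])]
  | sup P Q ihP ihQ =>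
    obtain ⟨hWP, hWQ, hc⟩ := hP
    simp only [inv, blaxg, ihP hWP h, ihQ hWQ (hc ▸ h)]
  | orI F G P ih =>
    by_cases hFG : F = A ∧ G = B
    · simp only [inv, if_pos hFG, blaxg]
    · have hne : NForm.or A B ≠ NForm.or F G := fun he => by
        injection he with hA hB
        exact hFG ⟨hA.symm, hB.symm⟩
      have hmem := (Finset.mem_insert.1 h).resolve_left hne
      simp only [inv, if_neg hFG, blaxg,
        ih hP.1 (Finset.mem_of_mem_erase (Finset.mem_of_mem_erase hmem))]
  | andI F G P Q ihP ihQ =>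
    obtain ⟨hWP, hWQ, Γ, hF, -, hcP, hcQ, -⟩ := hP
    have hmem : NForm.or A B ∈ Γ := by simpa [concl, hcP, hF] using h
    simp only [inv, blaxg, ihP hWP (by simp [hcP, hmem]), ihQ hWQ (by simp [hcQ, hmem])]
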